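/- Pointwise bound on the commutator kernel (estimate (pi152.5) in the proof of Lemma 3.5): Set X̃(α) := 2ε + f(α) + g(α) and define, for α, β ∈ ℝ, K(α,β) := ∫_ℝ (ψ_{√ε/2⁶}(ρ)/ρ)·ψ_{√ε/2⁶}(β−α−ρ)·K̃(α,β;ρ) dρ, where K̃(α,β;ρ) := [X̃(α+ρ)²ψ_{√ε/2⁶}(α+ρ)/(ρ² + X̃(α+ρ)²)]·[X̃(β)ψ_{√ε/2⁶}(β)/((β−α−ρ)² + X̃(β)²)] − [X̃(β)²ψ_{√ε/2⁶}(β)/(ρ² + X̃(β)²)]·[X̃(β−ρ)ψ_{√ε/2⁶}(β−ρ)/((β−α−ρ)² + X̃(β−ρ)²)] (the integrand is understood to vanish whenever one of the cutoffs ψ_{√ε/2⁶} vanishes, so all arguments of f and g lie in (−δ,δ)); this K is the kernel of the commutator in the sense that (H*M* − M*H*)φ(α) = (1/4π²)∫_ℝ K(α,β)φ(β) dβ. Then for all α, β ∈ ℝ one has |K(α,β)| ≲ ψ_{√ε}(β)·ψ_{√ε}(α)·ε(|α| + |β| + ε)/((β−α)² + ε²). -/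

import Mathlib

noncomputable section
open Set MeasureTheory Filter Real

/-- The principal value at `α` of the integral `∫_ℝ F(β) dβ`, understood as the limit of the
integrals over `{β : r < |α − β|}` as `r → 0⁺`. -/
def pvI (F : ℝ → ℝ) (α : ℝ) : ℝ :=
  limUnder (nhdsWithin (0:ℝ) (Ioi 0)) (fun r => ∫ β in {β : ℝ | r < |α - β|}, F β)

/-- `ψ` is a smooth even cutoff, with values in `[0,1]`, supported in `[−1,1]`,
equal to `1` on `[−1/2,1/2]`. -/
def IsCutoff (ψ : ℝ → ℝ) : Prop :=
  ContDiff ℝ (⊤ : ℕ∞) ψ ∧ (∀ x : ℝ, ψ (-x) = ψ x) ∧ (∀ x : ℝ, ψ x ∈ Icc (0:ℝ) 1) ∧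
    (∀ x : ℝ, 1 < |x| → ψ x = 0) ∧ (∀ x : ℝ, |x| ≤ 1/2 → ψ x = 1)

/-- The rescaled cutoff `ψ_r(x) = ψ(x/r)`. -/
def scut (ψ : ℝ → ℝ) (r x : ℝ) : ℝ := ψ (x / r)

/-- `X̃(α) = 2ε + f(α) + g(α)`. -/
def Xt (ε : ℝ) (f g : ℝ → ℝ) (α : ℝ) : ℝ := 2 * ε + f α + g α

/-- The operator `T_{1,f}`. -/
def T1 (ψ : ℝ → ℝ) (ε : ℝ) (f : ℝ → ℝ) (h : ℝ → ℝ) (α : ℝ) : ℝ :=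
  (2 * π)⁻¹ * pvI (fun β =>
    (f α - f β) / ((α - β) ^ 2 + (f α - f β) ^ 2) * h β * scut ψ (Real.sqrt ε) (α - β)) α

/-- The operator `T_{2,f}`. -/
def T2 (ψ : ℝ → ℝ) (ε : ℝ) (f : ℝ → ℝ) (h : ℝ → ℝ) (α : ℝ) : ℝ :=
  (2 * π)⁻¹ * pvI (fun β =>
    (α - β) / ((α - β) ^ 2 + (f α - f β) ^ 2) * h β * scut ψ (Real.sqrt ε) (α - β)) α

/-- The operator `T_{3,(f,g)}`. -/
def T3 (ψ : ℝ → ℝ) (ε : ℝ) (f g : ℝ → ℝ) (h : ℝ → ℝ) (α : ℝ) : ℝ :=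
  (2 * π)⁻¹ * ∫ β : ℝ,
    (2 * ε + f α + g β) / ((α - β) ^ 2 + (2 * ε + f α + g β) ^ 2) * h β *
      scut ψ (Real.sqrt ε) (α - β)

/-- The operator `T_{4,(f,g)}`. -/
def T4 (ψ : ℝ → ℝ) (ε : ℝ) (f g : ℝ → ℝ) (h : ℝ → ℝ) (α : ℝ) : ℝ :=
  (2 * π)⁻¹ * ∫ β : ℝ,
    (α - β) / ((α - β) ^ 2 + (2 * ε + f α + g β) ^ 2) * h β * scut ψ (Real.sqrt ε) (α - β)

/-- The kernel of the operator `H`. -/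
def Hker (ψ : ℝ → ℝ) (ε : ℝ) (f g : ℝ → ℝ) (α β : ℝ) : ℝ :=
  (α - β)⁻¹ * ((Xt ε f g α) ^ 2 / ((α - β) ^ 2 + (Xt ε f g α) ^ 2)) *
    scut ψ (Real.sqrt ε / 2 ^ 6) α * scut ψ (Real.sqrt ε / 2 ^ 6) (α - β)

/-- The kernel of the operator `M`. -/
def Mker (ψ : ℝ → ℝ) (ε : ℝ) (f g : ℝ → ℝ) (α β : ℝ) : ℝ :=
  (Xt ε f g α) / ((α - β) ^ 2 + (Xt ε f g α) ^ 2) *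
    scut ψ (Real.sqrt ε / 2 ^ 6) α * scut ψ (Real.sqrt ε / 2 ^ 6) (α - β)

/-- The operator `H` (a principal value integral in the second variable of the kernel). -/
def Hop (ψ : ℝ → ℝ) (ε : ℝ) (f g : ℝ → ℝ) (h : ℝ → ℝ) (α : ℝ) : ℝ :=
  (2 * π)⁻¹ * pvI (fun β => Hker ψ ε f g α β * h β) α

/-- The adjoint operator `H*` (integration of the kernel of `H` in its first variable). -/
def Hstar (ψ : ℝ → ℝ) (ε : ℝ) (f g : ℝ → ℝ) (φ : ℝ → ℝ) (β : ℝ) : ℝ :=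
  (2 * π)⁻¹ * pvI (fun α => Hker ψ ε f g α β * φ α) β

/-- The operator `M`. -/
def Mop (ψ : ℝ → ℝ) (ε : ℝ) (f g : ℝ → ℝ) (h : ℝ → ℝ) (α : ℝ) : ℝ :=
  (2 * π)⁻¹ * ∫ β : ℝ, Mker ψ ε f g α β * h β

/-- The adjoint operator `M*` (integration of the kernel of `M` in its first variable). -/
def Mstar (ψ : ℝ → ℝ) (ε : ℝ) (f g : ℝ → ℝ) (φ : ℝ → ℝ) (β : ℝ) : ℝ :=
  (2 * π)⁻¹ * ∫ α : ℝ, Mker ψ ε f g α β * φ α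

/-- The class `C₂` of test functions: `C¹` functions compactly supported in `I_δ = (−δ,δ)` with
`|φ⁽ᵏ⁾(α)| ≤ ε/(ε^{2+k} + |α|^{2+k})` on `I_δ` for `k ∈ {0,1}`. -/
def InC2 (δ ε : ℝ) (φ : ℝ → ℝ) : Prop :=
  ContDiff ℝ 1 φ ∧ HasCompactSupport φ ∧ tsupport φ ⊆ Ioo (-δ) δ ∧
    ∀ α ∈ Ioo (-δ) δ,
      |φ α| ≤ ε / (ε ^ 2 + |α| ^ 2) ∧ |deriv φ α| ≤ ε / (ε ^ 3 + |α| ^ 3)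

/-- The standing hypotheses on `f, g : (−δ,δ) → ℝ`: they are `C⁵`, with
`‖f‖_{C³} + ‖g‖_{C³} ≤ A`, `f(0) = f'(0) = g(0) = g'(0) = 0`, and
`f(α) + g(β) ≥ −ε` for `α, β ∈ (−4√ε, 4√ε)`. -/
def GoodFG (δ A ε : ℝ) (f g : ℝ → ℝ) : Prop :=
  ContDiffOn ℝ 5 f (Ioo (-δ) δ) ∧ ContDiffOn ℝ 5 g (Ioo (-δ) δ) ∧
    f 0 = 0 ∧ g 0 = 0 ∧
    derivWithin f (Ioo (-δ) δ) 0 = 0 ∧ derivWithin g (Ioo (-δ) δ) 0 = 0 ∧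
    (∀ x ∈ Ioo (-δ) δ, ∀ i : ℕ, i ≤ 3 →
      |iteratedDerivWithin i f (Ioo (-δ) δ) x| + |iteratedDerivWithin i g (Ioo (-δ) δ) x| ≤ A) ∧
    (∀ α ∈ Ioo (-(4 * Real.sqrt ε)) (4 * Real.sqrt ε),
      ∀ β ∈ Ioo (-(4 * Real.sqrt ε)) (4 * Real.sqrt ε), -ε ≤ f α + g β)
/-- The inner commutator kernel `K̃(α,β;ρ)` from the proof of Lemma 3.5. -/
def Ktil (ψ : ℝ → ℝ) (ε : ℝ) (f g : ℝ → ℝ) (α β ρ : ℝ) : ℝ :=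
  (Xt ε f g (α + ρ)) ^ 2 * scut ψ (Real.sqrt ε / 2 ^ 6) (α + ρ) /
      (ρ ^ 2 + (Xt ε f g (α + ρ)) ^ 2) *
      (Xt ε f g β * scut ψ (Real.sqrt ε / 2 ^ 6) β /
        ((β - α - ρ) ^ 2 + (Xt ε f g β) ^ 2)) -
    (Xt ε f g β) ^ 2 * scut ψ (Real.sqrt ε / 2 ^ 6) β / (ρ ^ 2 + (Xt ε f g β) ^ 2) *
      (Xt ε f g (β - ρ) * scut ψ (Real.sqrt ε / 2 ^ 6) (β - ρ) /
        ((β - α - ρ) ^ 2 + (Xt ε f g (β - ρ)) ^ 2))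

/-- The commutator kernel `K(α,β)` from the proof of Lemma 3.5. -/
def Kcom (ψ : ℝ → ℝ) (ε : ℝ) (f g : ℝ → ℝ) (α β : ℝ) : ℝ :=
  ∫ ρ : ℝ, scut ψ (Real.sqrt ε / 2 ^ 6) ρ / ρ * scut ψ (Real.sqrt ε / 2 ^ 6) (β - α - ρ) *
    Ktil ψ ε f g α β ρ

/-!
The gap `X` has a critical point at `0`, so on the support of the cutoffs it is comparable to `ε`
and satisfies `|X x - X y| ≲ (|x| + |y|) |x - y|`. Freezing the spatial arguments `α + ρ` and
`β - ρ` of the integrand at `α` and `β` therefore costs a factor `(|α| + |β| + |ρ|) |ρ|`, which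
absorbs the singularity `1/ρ`.

After freezing, the singularity `1/ρ` is odd, and averaging over `ρ ↦ -ρ` replaces the regular
factor by the difference of its values at `β - α - ρ` and `β - α + ρ`. This difference gains
`|ρ| / |β - α|`, and the lost `|β - α|` is supplied by the cancellation between `X α` and `X β`.

What remains are products of two Lorentzians `P` of width `ε`, for which
`P x * P u ≲ P (x + u) * (P x + P u)` because `x` or `u` is at least half as large as `x + u`.
With `x = ± ρ` and `u = β - α ∓ ρ` this leaves `P (β - α)` times a function of `ρ` whose integral
does not depend on `ε`.
-/

/-- The Lorentzian of width `ε` (the Poisson kernel of the upper half-plane at height `ε`), without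
the normalising factor `1/π`. -/
def lorentzian (ε x : ℝ) : ℝ := ε / (x ^ 2 + ε ^ 2)

section Lorentzian

variable {ε B X Y x u : ℝ}

lemma lorentzian_neg (ε x : ℝ) : lorentzian ε (-x) = lorentzian ε x := by
  simp only [lorentzian, neg_sq]

lemma lorentzian_pos (hε : 0 < ε) (x : ℝ) : 0 < lorentzian ε x := by
  unfold lorentzian; positivity

lemma lorentzian_eq_pi_mul_cauchyPDFReal (hε : 0 ≤ ε) :
    lorentzian ε = fun x ↦ π * ProbabilityTheory.cauchyPDFReal 0 ε.toNNReal x := by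
  ext x
  rw [lorentzian, ProbabilityTheory.cauchyPDFReal_def, coe_toNNReal ε hε, sub_zero, mul_assoc,
    mul_inv_cancel_left₀ pi_ne_zero, div_eq_mul_inv]

lemma integrable_lorentzian (hε : 0 ≤ ε) : Integrable (lorentzian ε) := by
  rw [lorentzian_eq_pi_mul_cauchyPDFReal hε]
  exact (ProbabilityTheory.integrable_cauchyPDFReal _).const_mul π

lemma integral_lorentzian (hε : 0 < ε) : ∫ x, lorentzian ε x = π := by
  have hε' : ε.toNNReal ≠ 0 := (toNNReal_pos.2 hε).ne'
  rw [lorentzian_eq_pi_mul_cauchyPDFReal hε.le, integral_const_mul,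
    ProbabilityTheory.integral_cauchyPDFReal_eq_one _ hε', mul_one]

lemma lorentzian_le_mul_lorentzian (hε : 0 < ε) (hX : ε ≤ X) (hXB : X ≤ B * ε) :
    lorentzian X u ≤ B * lorentzian ε u := by
  calc X / (u ^ 2 + X ^ 2) ≤ B * ε / (u ^ 2 + ε ^ 2) := by
        have : 0 < X := hε.trans_le hX
        gcongr
        linarith
    _ = B * (ε / (u ^ 2 + ε ^ 2)) := mul_div_assoc _ _ _

lemma abs_lorentzian_sub_lorentzian_le (hε : 0 < ε) (hX : ε ≤ X) (hY : ε ≤ Y) :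
    |lorentzian X u - lorentzian Y u| ≤ |X - Y| * (lorentzian ε u / ε) := by
  have hX0 : 0 < X := hε.trans_le hX
  have hY0 : 0 < Y := hε.trans_le hY
  have hXY : ε ^ 2 ≤ X * Y := by nlinarith
  have hnum : |u ^ 2 - X * Y| ≤ u ^ 2 + X * Y := by
    rw [abs_le]; constructor <;> nlinarith [sq_nonneg u, mul_pos hX0 hY0]
  have hcauchy : (u ^ 2 + X * Y) * (u ^ 2 + ε ^ 2) ≤ (u ^ 2 + X ^ 2) * (u ^ 2 + Y ^ 2) :=
    calc (u ^ 2 + X * Y) * (u ^ 2 + ε ^ 2) ≤ (u ^ 2 + X * Y) * (u ^ 2 + X * Y) := by gcongr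
      _ ≤ (u ^ 2 + X ^ 2) * (u ^ 2 + Y ^ 2) := by nlinarith [sq_nonneg (u * (X - Y))]
  have hdiff : lorentzian X u - lorentzian Y u =
      (X - Y) * ((u ^ 2 - X * Y) / ((u ^ 2 + X ^ 2) * (u ^ 2 + Y ^ 2))) := by
    unfold lorentzian; field_simp; ring
  have hε' : lorentzian ε u / ε = 1 / (u ^ 2 + ε ^ 2) := by
    unfold lorentzian; field_simp
  rw [hdiff, hε', abs_mul, abs_div, abs_of_pos (a := _ * _) (by positivity)]
  refine mul_le_mul_of_nonneg_left ?_ (abs_nonneg _)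
  rw [div_le_div_iff₀ (by positivity) (by positivity), one_mul]
  exact (mul_le_mul_of_nonneg_right hnum (by positivity)).trans hcauchy

lemma abs_mul_abs_lorentzian_sub_lorentzian_add_le (hX : 0 < X) (D ρ : ℝ) :
    |D| * |lorentzian X (D - ρ) - lorentzian X (D + ρ)| ≤
      2 * |ρ| * (lorentzian X (D - ρ) + lorentzian X (D + ρ)) := by
  have hdiff : |D| * |lorentzian X (D - ρ) - lorentzian X (D + ρ)| =
      4 * D ^ 2 * |ρ| * X / (((D - ρ) ^ 2 + X ^ 2) * ((D + ρ) ^ 2 + X ^ 2)) := by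
    have : lorentzian X (D - ρ) - lorentzian X (D + ρ) =
        4 * X / (((D - ρ) ^ 2 + X ^ 2) * ((D + ρ) ^ 2 + X ^ 2)) * (D * ρ) := by
      unfold lorentzian; field_simp; ring
    rw [this, abs_mul, abs_of_pos (a := _ / _) (by positivity), abs_mul, ← sq_abs D]
    ring
  have hsum : 2 * |ρ| * (lorentzian X (D - ρ) + lorentzian X (D + ρ)) =
      2 * |ρ| * X * (((D - ρ) ^ 2 + X ^ 2) + ((D + ρ) ^ 2 + X ^ 2)) /
        (((D - ρ) ^ 2 + X ^ 2) * ((D + ρ) ^ 2 + X ^ 2)) := by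
    unfold lorentzian; field_simp; ring
  rw [hdiff, hsum]
  have : 4 * D ^ 2 ≤ 2 * (((D - ρ) ^ 2 + X ^ 2) + ((D + ρ) ^ 2 + X ^ 2)) := by
    nlinarith [sq_nonneg ρ, sq_nonneg X]
  have := mul_le_mul_of_nonneg_right this (by positivity : 0 ≤ |ρ| * X)
  refine div_le_div_of_nonneg_right ?_ (by positivity)
  linarith

lemma mul_lorentzian_mul_lorentzian_le {c k D : ℝ} (hε : 0 < ε)
    (h : c * (D ^ 2 + ε ^ 2) ≤ k * ((x ^ 2 + ε ^ 2) + (u ^ 2 + ε ^ 2))) :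
    c * (lorentzian ε x * lorentzian ε u) ≤
      k * (lorentzian ε D * (lorentzian ε x + lorentzian ε u)) := by
  have hl : c * (lorentzian ε x * lorentzian ε u) = c * (D ^ 2 + ε ^ 2) *
      (ε ^ 2 / ((D ^ 2 + ε ^ 2) * (x ^ 2 + ε ^ 2) * (u ^ 2 + ε ^ 2))) := by
    unfold lorentzian; field_simp
  have hr : k * (lorentzian ε D * (lorentzian ε x + lorentzian ε u)) =
      k * ((x ^ 2 + ε ^ 2) + (u ^ 2 + ε ^ 2)) *
        (ε ^ 2 / ((D ^ 2 + ε ^ 2) * (x ^ 2 + ε ^ 2) * (u ^ 2 + ε ^ 2))) := by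
    unfold lorentzian; field_simp; ring
  rw [hl, hr]
  gcongr

lemma lorentzian_mul_lorentzian_le (hε : 0 < ε) (x u : ℝ) :
    lorentzian ε x * lorentzian ε u ≤
      2 * (lorentzian ε (x + u) * (lorentzian ε x + lorentzian ε u)) := by
  simpa only [one_mul] using mul_lorentzian_mul_lorentzian_le (c := 1) hε
    (by nlinarith [sq_nonneg (x - u)])

lemma lorentzian_mul_lorentzian_sub_add_le (hε : 0 < ε) (D ρ : ℝ) :
    lorentzian ε ρ * (lorentzian ε (D - ρ) + lorentzian ε (D + ρ)) ≤
      2 * (lorentzian ε D *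
        (2 * lorentzian ε ρ + lorentzian ε (D - ρ) + lorentzian ε (D + ρ))) := by
  have hsub := lorentzian_mul_lorentzian_le hε ρ (D - ρ)
  have hadd := lorentzian_mul_lorentzian_le hε (-ρ) (D + ρ)
  rw [add_sub_cancel] at hsub
  rw [neg_add_cancel_comm_assoc, lorentzian_neg] at hadd
  linarith

lemma add_abs_mul_lorentzian_mul_lorentzian_le {N : ℝ} (hε : 0 < ε) (hN : |x + u| + ε ≤ N) :
    (N + |x|) * (lorentzian ε x * lorentzian ε u) ≤
      4 * N * (lorentzian ε (x + u) * (lorentzian ε x + lorentzian ε u)) := by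
  have hN0 : 0 ≤ N := by linarith [abs_nonneg (x + u)]
  set S := (x ^ 2 + ε ^ 2) + (u ^ 2 + ε ^ 2)
  have hD : (x + u) ^ 2 + ε ^ 2 ≤ 2 * S := by nlinarith [sq_nonneg (x - u)]
  have hDN : (x + u) ^ 2 + ε ^ 2 ≤ N * (|x + u| + ε) := by
    nlinarith [sq_abs (x + u), abs_nonneg (x + u)]
  have hx : |x| * (|x + u| + ε) ≤ 2 * S := by
    nlinarith [sq_nonneg (|x| - |x + u|), sq_nonneg (|x| - ε), sq_abs x, sq_abs (x + u),
      sq_nonneg u]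
  refine mul_lorentzian_mul_lorentzian_le hε ?_
  calc (N + |x|) * ((x + u) ^ 2 + ε ^ 2)
      = N * ((x + u) ^ 2 + ε ^ 2) + |x| * ((x + u) ^ 2 + ε ^ 2) := add_mul _ _ _
    _ ≤ N * (2 * S) + |x| * (N * (|x + u| + ε)) := by gcongr
    _ = N * (2 * S) + N * (|x| * (|x + u| + ε)) := by ring
    _ ≤ N * (2 * S) + N * (2 * S) := by gcongr
    _ = 4 * N * S := by ring

end Lorentzian

lemma abs_setIntegral_le_half_integral {F G : ℝ → ℝ} {S : Set ℝ} (hS : Neg.neg ⁻¹' S = S)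
    (hG : Integrable G) (hFG : ∀ x, |F x + F (-x)| ≤ G x) :
    |∫ x in S, F x| ≤ (∫ x, G x) / 2 := by
  have hG0 : 0 ≤ G := fun x ↦ (abs_nonneg _).trans (hFG x)
  by_cases hF : IntegrableOn F S
  · have hneg := Measure.measurePreserving_neg (volume : Measure ℝ)
    have hemb := (MeasurableEquiv.neg ℝ).measurableEmbedding
    have hF' : IntegrableOn (fun x ↦ F (-x)) S := by
      have := (hneg.integrableOn_comp_preimage hemb).2 hF
      rwa [hS] at this
    have hreflect : ∫ x in S, F (-x) = ∫ x in S, F x := by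
      simpa only [hS] using hneg.setIntegral_preimage_emb hemb F S
    have hsymm : ∫ x in S, (F x + F (-x)) = 2 * ∫ x in S, F x := by
      rw [integral_add hF hF', hreflect, two_mul]
    have hle : |∫ x in S, (F x + F (-x))| ≤ ∫ x, G x :=
      (norm_integral_le_of_norm_le (f := fun x ↦ F x + F (-x)) hG.integrableOn
        (.of_forall hFG)).trans
        (setIntegral_le_integral hG (.of_forall hG0))
    rw [hsymm, abs_mul, abs_two] at hle
    linarith
  · rw [integral_undef hF, abs_zero]
    exact div_nonneg (integral_nonneg hG0) two_pos.le

/-- An even cutoff with values in `[0,1]`, equal to `1` on `[−r/2,r/2]`, vanishing off `[−r,r]`.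
Its Lipschitz constant is recorded as `L/r`, so that `L` is invariant under rescaling. -/
structure IsCutoffOfRadius (r : ℝ) (L : NNReal) (w : ℝ → ℝ) : Prop where
  radius_pos : 0 < r
  even : w.Even
  nonneg : ∀ x, 0 ≤ w x
  le_one : ∀ x, w x ≤ 1
  eq_zero : ∀ {x}, r < |x| → w x = 0
  eq_one : ∀ {x}, |x| ≤ r / 2 → w x = 1
  abs_sub_le : ∀ x y, |w x - w y| ≤ L / r * |x - y|

lemma IsCutoff.exists_isCutoffOfRadius_one {ψ : ℝ → ℝ} (hψ : IsCutoff ψ) :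
    ∃ L, IsCutoffOfRadius 1 L ψ := by
  obtain ⟨hsmooth, heven, hrange, hzero, hone⟩ := hψ
  have hsupp : HasCompactSupport ψ :=
    .intro (K := Icc (-1) 1) isCompact_Icc fun x hx ↦ hzero x (not_le.1 fun h ↦ hx (abs_le.1 h))
  obtain ⟨L, hL⟩ := (hsmooth.of_le
    (by exact_mod_cast le_top : (1 : WithTop ℕ∞) ≤ ((⊤ : ℕ∞) : WithTop ℕ∞))
    ).lipschitzWith_of_hasCompactSupport hsupp one_ne_zero
  exact ⟨L, one_pos, heven, fun x ↦ (hrange x).1, fun x ↦ (hrange x).2, hzero _, hone _,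
    fun x y ↦ by simpa only [div_one, Real.dist_eq] using hL.dist_le_mul x y⟩

namespace IsCutoffOfRadius

variable {r : ℝ} {L : NNReal} {w : ℝ → ℝ}

lemma scut {ψ : ℝ → ℝ} (hψ : IsCutoffOfRadius 1 L ψ) (hr : 0 < r) :
    IsCutoffOfRadius r L (scut ψ r) where
  radius_pos := hr
  even x := by simp only [_root_.scut, neg_div, hψ.even _]
  nonneg _ := hψ.nonneg _
  le_one _ := hψ.le_one _
  eq_zero hx := hψ.eq_zero (by rwa [abs_div, abs_of_pos hr, one_lt_div hr])
  eq_one hx := hψ.eq_one (by rwa [abs_div, abs_of_pos hr, div_le_iff₀ hr, one_div_mul_eq_div])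
  abs_sub_le x y := by
    have h := hψ.abs_sub_le (x / r) (y / r)
    rw [div_one, ← sub_div, abs_div, abs_of_pos hr, ← mul_div_assoc, mul_div_right_comm] at h
    exact h

lemma abs_le_one (hw : IsCutoffOfRadius r L w) (x : ℝ) : |w x| ≤ 1 := by
  rw [abs_of_nonneg (hw.nonneg x)]; exact hw.le_one x

lemma abs_div_mul_abs_le_one (hw : IsCutoffOfRadius r L w) (x : ℝ) : |w x / x| * |x| ≤ 1 := by
  rcases eq_or_ne x 0 with rfl | hx
  · simp
  · rw [abs_div, div_mul_cancel₀ _ (abs_ne_zero.2 hx)]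
    exact hw.abs_le_one x

-- Near the origin `w` is constant, and elsewhere the extra factor `|x| + |y|` is at least `r/2`.
lemma abs_sub_le_add_mul (hw : IsCutoffOfRadius r L w) (x y : ℝ) :
    |w x - w y| ≤ 2 * L / r ^ 2 * (|x| + |y|) * |x - y| := by
  have hr := hw.radius_pos
  rcases le_or_gt (|x| + |y|) (r / 2) with hxy | hxy
  · rw [hw.eq_one (x := x) (by linarith [abs_nonneg y]),
      hw.eq_one (x := y) (by linarith [abs_nonneg x]), sub_self, abs_zero]
    positivity
  · calc |w x - w y| ≤ L / r * |x - y| := hw.abs_sub_le x y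
      _ = 2 * L / r ^ 2 * (r / 2) * |x - y| := by field_simp
      _ ≤ 2 * L / r ^ 2 * (|x| + |y|) * |x - y| := by gcongr

lemma abs_mul_abs_mul_lorentzian_sub_le (hw : IsCutoffOfRadius r L w) {X D : ℝ} (hX : 0 < X)
    (hD : |D| ≤ 4 * r) (ρ : ℝ) :
    |D| * |w (D - ρ) * lorentzian X (D - ρ) - w (D + ρ) * lorentzian X (D + ρ)| ≤
      (8 * L + 2) * |ρ| * (lorentzian X (D - ρ) + lorentzian X (D + ρ)) := by
  have hr := hw.radius_pos
  set p := lorentzian X (D - ρ)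
  set q := lorentzian X (D + ρ)
  have hp : 0 < p := lorentzian_pos hX _
  have hq : 0 < q := lorentzian_pos hX _
  have hwdiff : |D| * |w (D - ρ) - w (D + ρ)| ≤ 8 * L * |ρ| := by
    have hsub : |(D - ρ) - (D + ρ)| = 2 * |ρ| := by
      rw [show (D - ρ) - (D + ρ) = -2 * ρ by ring, abs_mul]; norm_num
    calc |D| * |w (D - ρ) - w (D + ρ)| ≤ 4 * r * (L / r * (2 * |ρ|)) := by
          gcongr
          exact hsub ▸ hw.abs_sub_le _ _
      _ = 8 * L * |ρ| := by field_simp; ring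
  have hpq : |D| * |p - q| ≤ 2 * |ρ| * (p + q) :=
    abs_mul_abs_lorentzian_sub_lorentzian_add_le hX D ρ
  calc |D| * |w (D - ρ) * p - w (D + ρ) * q|
      = |D| * |(w (D - ρ) - w (D + ρ)) * p + w (D + ρ) * (p - q)| := by ring_nf
    _ ≤ |D| * (|w (D - ρ) - w (D + ρ)| * p + 1 * |p - q|) := by
        gcongr
        refine (abs_add_le _ _).trans ?_
        rw [abs_mul, abs_mul, abs_of_pos hp]
        gcongr
        exact hw.abs_le_one _
    _ = |D| * |w (D - ρ) - w (D + ρ)| * p + |D| * |p - q| := by ring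
    _ ≤ 8 * L * |ρ| * (p + q) + 2 * |ρ| * (p + q) := by
        gcongr
        linarith
    _ = (8 * L + 2) * |ρ| * (p + q) := by ring

end IsCutoffOfRadius

/-- The factor `X(x) w(x) / (u² + X(x)²)` through which the kernel of `M` enters `Ktil`. -/
def poissonFactor (X w : ℝ → ℝ) (x u : ℝ) : ℝ := w x * lorentzian (X x) u

/-- The factor `X(x)² w(x) / (r² + X(x)²)` through which the kernel of `H` enters `Ktil`. -/
def hilbertFactor (X w : ℝ → ℝ) (x r : ℝ) : ℝ := X x * poissonFactor X w x r

lemma hilbertFactor_neg (X w : ℝ → ℝ) (x r : ℝ) :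
    hilbertFactor X w x (-r) = hilbertFactor X w x r := by
  simp only [hilbertFactor, poissonFactor, lorentzian_neg]

/-- The width `X` is comparable to `ε` on `[−R,R]`, and both `X` and the weight `ε w` have a
Lipschitz constant there that degenerates linearly at the origin, as for functions with a critical
point at `0`. -/
structure IsSlowlyVarying (ε B K R : ℝ) (X w : ℝ → ℝ) : Prop where
  scale_pos : 0 < ε
  radius_pos : 0 < R
  le_width : ∀ {x}, |x| ≤ R → ε ≤ X x
  width_le : ∀ {x}, |x| ≤ R → X x ≤ B * ε
  abs_width_sub_le : ∀ {x y}, |x| ≤ R → |y| ≤ R → |X x - X y| ≤ K * (|x| + |y|) * |x - y|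
  abs_weight_sub_le : ∀ {x y}, |x| ≤ R → |y| ≤ R →
    ε * |w x - w y| ≤ K * (|x| + |y|) * |x - y|
  abs_weight_le_one : ∀ x, |w x| ≤ 1

namespace IsSlowlyVarying

variable {ε B K R : ℝ} {X w : ℝ → ℝ} {x y u : ℝ}

lemma width_pos (h : IsSlowlyVarying ε B K R X w) (hx : |x| ≤ R) : 0 < X x :=
  h.scale_pos.trans_le (h.le_width hx)

lemma one_le (h : IsSlowlyVarying ε B K R X w) : 1 ≤ B := by
  have h0 : |(0 : ℝ)| ≤ R := by simpa only [abs_zero] using h.radius_pos.le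
  have hB : 1 * ε ≤ B * ε := by
    rw [one_mul]; exact (h.le_width h0).trans (h.width_le h0)
  exact le_of_mul_le_mul_right hB h.scale_pos

lemma slope_nonneg (h : IsSlowlyVarying ε B K R X w) : 0 ≤ K := by
  have hR := h.radius_pos
  have hK := (abs_nonneg _).trans <| h.abs_width_sub_le (x := R) (y := 0)
    (abs_of_pos hR).le (by simpa only [abs_zero] using hR.le)
  rw [abs_zero, add_zero, sub_zero, mul_assoc] at hK
  exact nonneg_of_mul_nonneg_left hK (mul_pos (abs_pos.2 hR.ne') (abs_pos.2 hR.ne'))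

lemma abs_poissonFactor_le (h : IsSlowlyVarying ε B K R X w) (hx : |x| ≤ R) :
    |poissonFactor X w x u| ≤ B * lorentzian ε u := by
  have hpos := lorentzian_pos (h.width_pos hx) u
  calc |poissonFactor X w x u| = |w x| * lorentzian (X x) u := by
        rw [poissonFactor, abs_mul, abs_of_pos hpos]
    _ ≤ lorentzian (X x) u := mul_le_of_le_one_left hpos.le (h.abs_weight_le_one x)
    _ ≤ B * lorentzian ε u :=
        lorentzian_le_mul_lorentzian h.scale_pos (h.le_width hx) (h.width_le hx)

lemma abs_hilbertFactor_le (h : IsSlowlyVarying ε B K R X w) (hx : |x| ≤ R) :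
    |hilbertFactor X w x u| ≤ B ^ 2 * ε * lorentzian ε u := by
  have hX := h.width_pos hx
  have hB := h.one_le
  have hε := h.scale_pos
  rw [hilbertFactor, abs_mul, abs_of_pos hX]
  calc X x * |poissonFactor X w x u| ≤ (B * ε) * (B * lorentzian ε u) := by
        gcongr
        exacts [h.width_le hx, h.abs_poissonFactor_le hx]
    _ = B ^ 2 * ε * lorentzian ε u := by ring

lemma abs_poissonFactor_sub_le (h : IsSlowlyVarying ε B K R X w) (hx : |x| ≤ R) (hy : |y| ≤ R) :
    |poissonFactor X w x u - poissonFactor X w y u| ≤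
      2 * B * (K * (|x| + |y|) * |x - y|) * (lorentzian ε u / ε) := by
  have hε := h.scale_pos
  have hB := h.one_le
  have hP := lorentzian_pos hε u
  have hPy := lorentzian_pos (h.width_pos hy) u
  set κ := K * (|x| + |y|) * |x - y|
  have hκ : 0 ≤ κ := (abs_nonneg _).trans (h.abs_width_sub_le hx hy)
  have hwidth : |w x * (lorentzian (X x) u - lorentzian (X y) u)| ≤ κ * (lorentzian ε u / ε) := by
    rw [abs_mul]
    refine (mul_le_of_le_one_left (abs_nonneg _) (h.abs_weight_le_one x)).trans ?_
    refine (abs_lorentzian_sub_lorentzian_le hε (h.le_width hx) (h.le_width hy)).trans ?_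
    gcongr
    exact h.abs_width_sub_le hx hy
  have hweight : |(w x - w y) * lorentzian (X y) u| ≤ B * κ * (lorentzian ε u / ε) := by
    rw [abs_mul, abs_of_pos hPy]
    calc |w x - w y| * lorentzian (X y) u ≤ |w x - w y| * (B * lorentzian ε u) := by
          gcongr
          exact lorentzian_le_mul_lorentzian hε (h.le_width hy) (h.width_le hy)
      _ = B * (ε * |w x - w y|) * (lorentzian ε u / ε) := by field_simp
      _ ≤ B * κ * (lorentzian ε u / ε) := by
          gcongr
          exact h.abs_weight_sub_le hx hy
  calc |poissonFactor X w x u - poissonFactor X w y u|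
      = |w x * (lorentzian (X x) u - lorentzian (X y) u) + (w x - w y) * lorentzian (X y) u| := by
        unfold poissonFactor; ring_nf
    _ ≤ 1 * κ * (lorentzian ε u / ε) + B * κ * (lorentzian ε u / ε) :=
        (abs_add_le _ _).trans (add_le_add (by rwa [one_mul]) hweight)
    _ ≤ B * κ * (lorentzian ε u / ε) + B * κ * (lorentzian ε u / ε) := by gcongr
    _ = 2 * B * κ * (lorentzian ε u / ε) := by ring

lemma abs_hilbertFactor_sub_le (h : IsSlowlyVarying ε B K R X w) (hx : |x| ≤ R) (hy : |y| ≤ R) :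
    |hilbertFactor X w x u - hilbertFactor X w y u| ≤
      3 * B ^ 2 * (K * (|x| + |y|) * |x - y|) * lorentzian ε u := by
  have hε := h.scale_pos
  have hB := h.one_le
  have hP := lorentzian_pos hε u
  have hPdiff := h.abs_poissonFactor_sub_le (u := u) hx hy
  have hXdiff := h.abs_width_sub_le hx hy
  set κ := K * (|x| + |y|) * |x - y|
  have hκ : 0 ≤ κ := (abs_nonneg _).trans hXdiff
  calc |hilbertFactor X w x u - hilbertFactor X w y u|
      = |X x * (poissonFactor X w x u - poissonFactor X w y u) +
          (X x - X y) * poissonFactor X w y u| := by unfold hilbertFactor; ring_nf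
    _ ≤ (B * ε) * (2 * B * κ * (lorentzian ε u / ε)) + κ * (B * lorentzian ε u) := by
        refine (abs_add_le _ _).trans ?_
        rw [abs_mul, abs_mul, abs_of_pos (h.width_pos hx)]
        gcongr
        exacts [h.width_le hx, h.abs_poissonFactor_le hy]
    _ = (2 * B ^ 2 + B * 1) * κ * lorentzian ε u := by field_simp
    _ ≤ (2 * B ^ 2 + B * B) * κ * lorentzian ε u := by gcongr
    _ = 3 * B ^ 2 * κ * lorentzian ε u := by ring

lemma abs_hilbertFactor_sub_mul_add_mul_sub_le {x' y' m t r : ℝ}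
    (h : IsSlowlyVarying ε B K R X w)
    (hx : |x| ≤ R) (hx' : |x'| ≤ R) (hy : |y| ≤ R) (hy' : |y'| ≤ R)
    (hxm : |x'| + |x| ≤ m) (hym : |y| + |y'| ≤ m) (hxt : |x' - x| ≤ t) (hyt : |y - y'| ≤ t) :
    |(hilbertFactor X w x' r - hilbertFactor X w x r) * poissonFactor X w y u +
        hilbertFactor X w y r * (poissonFactor X w y u - poissonFactor X w y' u)| ≤
      5 * B ^ 3 * (K * m * t) * (lorentzian ε r * lorentzian ε u) := by
  have hε := h.scale_pos
  have hB := h.one_le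
  have hK := h.slope_nonneg
  have hm : 0 ≤ m := hxm.trans' (by positivity)
  have hPr := lorentzian_pos hε r
  have hPu := lorentzian_pos hε u
  have hH : |hilbertFactor X w x' r - hilbertFactor X w x r| ≤
      3 * B ^ 2 * (K * m * t) * lorentzian ε r :=
    (h.abs_hilbertFactor_sub_le hx' hx).trans (by gcongr)
  have hM : |poissonFactor X w y u - poissonFactor X w y' u| ≤
      2 * B * (K * m * t) * (lorentzian ε u / ε) :=
    (h.abs_poissonFactor_sub_le hy hy').trans (by gcongr)
  calc _ ≤ 3 * B ^ 2 * (K * m * t) * lorentzian ε r * (B * lorentzian ε u) +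
        B ^ 2 * ε * lorentzian ε r * (2 * B * (K * m * t) * (lorentzian ε u / ε)) := by
        refine (abs_add_le _ _).trans ?_
        rw [abs_mul, abs_mul]
        gcongr
        exacts [(abs_nonneg _).trans hH, h.abs_poissonFactor_le hy, h.abs_hilbertFactor_le hy]
    _ = _ := by field_simp; ring

lemma abs_mul_abs_mul_poissonFactor_sub_le {r D : ℝ} {L : NNReal} {v : ℝ → ℝ}
    (h : IsSlowlyVarying ε B K R X w) (hv : IsCutoffOfRadius r L v) (hx : |x| ≤ R)
    (hD : |D| ≤ 4 * r) (ρ : ℝ) :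
    |D| * |v (D - ρ) * poissonFactor X w x (D - ρ) - v (D + ρ) * poissonFactor X w x (D + ρ)| ≤
      (8 * L + 2) * |ρ| * (B * (lorentzian ε (D - ρ) + lorentzian ε (D + ρ))) := by
  have hX := hv.abs_mul_abs_mul_lorentzian_sub_le (h.width_pos hx) hD ρ
  have hP (u : ℝ) : lorentzian (X x) u ≤ B * lorentzian ε u :=
    lorentzian_le_mul_lorentzian h.scale_pos (h.le_width hx) (h.width_le hx)
  calc _ = |w x| * (|D| * |v (D - ρ) * lorentzian (X x) (D - ρ) -
        v (D + ρ) * lorentzian (X x) (D + ρ)|) := by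
        rw [mul_left_comm, ← abs_mul (w x)]
        unfold poissonFactor
        ring_nf
    _ ≤ |D| * |v (D - ρ) * lorentzian (X x) (D - ρ) - v (D + ρ) * lorentzian (X x) (D + ρ)| :=
        mul_le_of_le_one_left (by positivity) (h.abs_weight_le_one x)
    _ ≤ (8 * L + 2) * |ρ| * (lorentzian (X x) (D - ρ) + lorentzian (X x) (D + ρ)) := hX
    _ ≤ (8 * L + 2) * |ρ| * (B * (lorentzian ε (D - ρ) + lorentzian ε (D + ρ))) := by
        rw [mul_add B]
        gcongr <;> exact hP _

end IsSlowlyVarying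

/-- The integrand of `Kcom` for a general width `X` and a general cutoff `w`. -/
def commutatorIntegrand (X w : ℝ → ℝ) (α β ρ : ℝ) : ℝ :=
  w ρ / ρ * w (β - α - ρ) *
    (hilbertFactor X w (α + ρ) ρ * poissonFactor X w β (β - α - ρ) -
      hilbertFactor X w β ρ * poissonFactor X w (β - ρ) (β - α - ρ))

/-- The part of `commutatorIntegrand` left after the spatial arguments `α + ρ`, `β - ρ` are frozen
at `α`, `β`. It has a genuine `1/ρ` singularity. -/
def frozenIntegrand (X w : ℝ → ℝ) (α β ρ : ℝ) : ℝ :=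
  w ρ / ρ * w (β - α - ρ) *
    ((hilbertFactor X w α ρ - hilbertFactor X w β ρ) * poissonFactor X w β (β - α - ρ))

/-- The error made in passing from `commutatorIntegrand` to `frozenIntegrand`; its increments in
space cancel the `1/ρ`. -/
def freezingError (X w : ℝ → ℝ) (α β ρ : ℝ) : ℝ :=
  w ρ / ρ * w (β - α - ρ) *
    ((hilbertFactor X w (α + ρ) ρ - hilbertFactor X w α ρ) * poissonFactor X w β (β - α - ρ) +
      hilbertFactor X w β ρ *
        (poissonFactor X w β (β - α - ρ) - poissonFactor X w (β - ρ) (β - α - ρ)))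

lemma Kcom_eq_integral_commutatorIntegrand (ψ : ℝ → ℝ) (ε : ℝ) (f g : ℝ → ℝ) (α β : ℝ) :
    Kcom ψ ε f g α β =
      ∫ ρ, commutatorIntegrand (Xt ε f g) (scut ψ (√ε / 2 ^ 6)) α β ρ := by
  unfold Kcom Ktil commutatorIntegrand hilbertFactor poissonFactor lorentzian
  congr! 2 with ρ
  ring

lemma commutatorIntegrand_eq_frozenIntegrand_add (X w : ℝ → ℝ) (α β ρ : ℝ) :
    commutatorIntegrand X w α β ρ = frozenIntegrand X w α β ρ + freezingError X w α β ρ := by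
  unfold commutatorIntegrand frozenIntegrand freezingError
  ring

lemma frozenIntegrand_add_neg {X w : ℝ → ℝ} (hw : w.Even) (α β ρ : ℝ) :
    frozenIntegrand X w α β ρ + frozenIntegrand X w α β (-ρ) =
      w ρ / ρ * (hilbertFactor X w α ρ - hilbertFactor X w β ρ) *
        (w (β - α - ρ) * poissonFactor X w β (β - α - ρ) -
          w (β - α + ρ) * poissonFactor X w β (β - α + ρ)) := by
  simp only [frozenIntegrand, hilbertFactor_neg, hw ρ, sub_neg_eq_add, div_neg]
  ring

lemma commutatorIntegrand_eq_zero {s : ℝ} {L : NNReal} {X w : ℝ → ℝ}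
    (hw : IsCutoffOfRadius s L w) {α β : ℝ} (h : s < |β| ∨ 3 * s < |α|) (ρ : ℝ) :
    commutatorIntegrand X w α β ρ = 0 := by
  rcases lt_or_ge s |β| with hβ | hβ
  · simp [commutatorIntegrand, hilbertFactor, poissonFactor, hw.eq_zero hβ]
  rcases lt_or_ge s |ρ| with hρ | hρ
  · simp [commutatorIntegrand, hw.eq_zero hρ]
  have hu : s < |β - α - ρ| := by
    have hα := h.resolve_left hβ.not_gt
    have : |α| ≤ |β| + |ρ| + |β - α - ρ| := by
      calc |α| = |β - ρ - (β - α - ρ)| := by ring_nf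
        _ ≤ |β - ρ| + |β - α - ρ| := abs_sub _ _
        _ ≤ |β| + |ρ| + |β - α - ρ| := by gcongr; exact abs_sub _ _
    linarith
  simp [commutatorIntegrand, hw.eq_zero hu]

section CommutatorBound

variable {ε B K s : ℝ} {L : NNReal} {X w : ℝ → ℝ} {α β : ℝ}

lemma abs_freezingError_le (h : IsSlowlyVarying ε B K (4 * s) X w) (hw : IsCutoffOfRadius s L w)
    (hα : |α| ≤ 3 * s) (hβ : |β| ≤ s) (ρ : ℝ) :
    |freezingError X w α β ρ| ≤
      40 * B ^ 3 * K * ((|α| + |β| + ε) * lorentzian ε (β - α)) *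
        (lorentzian ε ρ + lorentzian ε (β - α - ρ)) := by
  have hε := h.scale_pos
  have hB := h.one_le
  have hK := h.slope_nonneg
  set u := β - α - ρ with hu
  set N := |α| + |β| + ε
  have hP := lorentzian_pos hε ρ
  have hQ := lorentzian_pos hε u
  have hPD := lorentzian_pos hε (β - α)
  rcases lt_or_ge s |ρ| with hρ | hρ
  · rw [freezingError, hw.eq_zero hρ, zero_div, zero_mul, zero_mul, abs_zero]
    positivity
  have hs := hw.radius_pos
  have hαρ : |α + ρ| ≤ |α| + |ρ| := abs_add_le _ _
  have hβρ : |β - ρ| ≤ |β| + |ρ| := abs_sub _ _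
  have hHM := h.abs_hilbertFactor_sub_mul_add_mul_sub_le (r := ρ) (u := u)
    (x := α) (x' := α + ρ) (y := β) (y' := β - ρ) (m := 2 * (N + |ρ|)) (t := |ρ|)
    (by linarith) (by linarith) (by linarith) (by linarith)
    (by linarith [abs_nonneg β, abs_nonneg ρ]) (by linarith [abs_nonneg α, abs_nonneg ρ])
    (by rw [add_sub_cancel_left]) (by rw [sub_sub_cancel])
  have hconv : (N + |ρ|) * (lorentzian ε ρ * lorentzian ε u) ≤
      4 * N * (lorentzian ε (β - α) * (lorentzian ε ρ + lorentzian ε u)) := by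
    have hD : ρ + u = β - α := by rw [hu]; ring
    rw [← hD]
    refine add_abs_mul_lorentzian_mul_lorentzian_le hε ?_
    rw [hD]
    linarith [abs_sub β α]
  rw [freezingError, abs_mul, abs_mul]
  calc _ ≤ |w ρ / ρ| * 1 *
        (5 * B ^ 3 * (K * (2 * (N + |ρ|)) * |ρ|) * (lorentzian ε ρ * lorentzian ε u)) := by
        gcongr
        exact hw.abs_le_one u
    _ = |w ρ / ρ| * |ρ| * (10 * B ^ 3 * K * ((N + |ρ|) * (lorentzian ε ρ * lorentzian ε u))) := by
        ring
    _ ≤ 1 * (10 * B ^ 3 * K *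
          (4 * N * (lorentzian ε (β - α) * (lorentzian ε ρ + lorentzian ε u)))) := by
        gcongr
        exact hw.abs_div_mul_abs_le_one ρ
    _ = _ := by ring

lemma abs_frozenIntegrand_add_neg_le (h : IsSlowlyVarying ε B K (4 * s) X w)
    (hw : IsCutoffOfRadius s L w) (hα : |α| ≤ 3 * s) (hβ : |β| ≤ s) (ρ : ℝ) :
    |frozenIntegrand X w α β ρ + frozenIntegrand X w α β (-ρ)| ≤
      12 * (4 * L + 1) * B ^ 3 * K * ((|α| + |β| + ε) * lorentzian ε (β - α)) *
        (2 * lorentzian ε ρ + lorentzian ε (β - α - ρ) + lorentzian ε (β - α + ρ)) := by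
  have hε := h.scale_pos
  have hB := h.one_le
  have hK := h.slope_nonneg
  have hs := hw.radius_pos
  have hβ' : |β| ≤ 4 * s := by linarith
  set D := β - α
  set N := |α| + |β| + ε
  have hPρ := (lorentzian_pos hε ρ).le
  have hPsub := (lorentzian_pos hε (D - ρ)).le
  have hPadd := (lorentzian_pos hε (D + ρ)).le
  have hH : |hilbertFactor X w α ρ - hilbertFactor X w β ρ| ≤
      3 * B ^ 2 * K * N * lorentzian ε ρ * |D| := by
    calc _ ≤ 3 * B ^ 2 * (K * (|α| + |β|) * |α - β|) * lorentzian ε ρ :=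
          h.abs_hilbertFactor_sub_le (by linarith) hβ'
      _ ≤ 3 * B ^ 2 * (K * N * |D|) * lorentzian ε ρ := by
          rw [abs_sub_comm α β]
          gcongr
          exact le_add_of_nonneg_right hε.le
      _ = _ := by ring
  have hM := h.abs_mul_abs_mul_poissonFactor_sub_le hw hβ' (D := D)
    (by linarith [abs_sub β α]) ρ
  have hconv := lorentzian_mul_lorentzian_sub_add_le hε D ρ
  rw [frozenIntegrand_add_neg hw.even, abs_mul, abs_mul]
  calc _ ≤ |w ρ / ρ| * (3 * B ^ 2 * K * N * lorentzian ε ρ * |D|) *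
        |w (D - ρ) * poissonFactor X w β (D - ρ) - w (D + ρ) * poissonFactor X w β (D + ρ)| := by
        gcongr
    _ = |w ρ / ρ| * (3 * B ^ 2 * K * N * lorentzian ε ρ) * (|D| *
        |w (D - ρ) * poissonFactor X w β (D - ρ) -
          w (D + ρ) * poissonFactor X w β (D + ρ)|) := by ring
    _ ≤ |w ρ / ρ| * (3 * B ^ 2 * K * N * lorentzian ε ρ) *
        ((8 * L + 2) * |ρ| * (B * (lorentzian ε (D - ρ) + lorentzian ε (D + ρ)))) := by
        gcongr
    _ = |w ρ / ρ| * |ρ| * (6 * (4 * L + 1) * B ^ 3 * K * N *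
        (lorentzian ε ρ * (lorentzian ε (D - ρ) + lorentzian ε (D + ρ)))) := by ring
    _ ≤ 1 * (6 * (4 * L + 1) * B ^ 3 * K * N * (2 * (lorentzian ε D *
        (2 * lorentzian ε ρ + lorentzian ε (D - ρ) + lorentzian ε (D + ρ))))) := by
        gcongr
        exact hw.abs_div_mul_abs_le_one ρ
    _ = _ := by ring

lemma abs_commutatorIntegrand_add_neg_le (h : IsSlowlyVarying ε B K (4 * s) X w)
    (hw : IsCutoffOfRadius s L w) (hα : |α| ≤ 3 * s) (hβ : |β| ≤ s) (ρ : ℝ) :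
    |commutatorIntegrand X w α β ρ + commutatorIntegrand X w α β (-ρ)| ≤
      4 * (13 + 12 * L) * B ^ 3 * K * ((|α| + |β| + ε) * lorentzian ε (β - α)) *
        (2 * lorentzian ε ρ + lorentzian ε (β - α - ρ) + lorentzian ε (β - α + ρ)) := by
  have hfrozen := abs_frozenIntegrand_add_neg_le h hw hα hβ ρ
  have hpos := abs_freezingError_le h hw hα hβ ρ
  have hneg := abs_freezingError_le h hw hα hβ (-ρ)
  rw [lorentzian_neg, sub_neg_eq_add] at hneg
  calc _ = |(frozenIntegrand X w α β ρ + frozenIntegrand X w α β (-ρ)) +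
        freezingError X w α β ρ + freezingError X w α β (-ρ)| := by
        simp only [commutatorIntegrand_eq_frozenIntegrand_add]
        ring_nf
    _ ≤ _ := abs_add_three _ _ _
    _ ≤ _ := add_le_add_three hfrozen hpos hneg
    _ = _ := by ring

lemma abs_setIntegral_commutatorIntegrand_le (h : IsSlowlyVarying ε B K (4 * s) X w)
    (hw : IsCutoffOfRadius s L w) (hα : |α| ≤ 3 * s) (hβ : |β| ≤ s) {S : Set ℝ}
    (hS : Neg.neg ⁻¹' S = S) :
    |∫ ρ in S, commutatorIntegrand X w α β ρ| ≤
      8 * π * (13 + 12 * L) * B ^ 3 * K * ((|α| + |β| + ε) * lorentzian ε (β - α)) := by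
  have hε := h.scale_pos
  have hP := integrable_lorentzian hε.le
  have hPsub : Integrable fun ρ ↦ lorentzian ε (β - α - ρ) := hP.comp_sub_left _
  have hPadd : Integrable fun ρ ↦ lorentzian ε (β - α + ρ) := hP.comp_add_left _
  have hPtwo : Integrable fun ρ ↦ 2 * lorentzian ε ρ + lorentzian ε (β - α - ρ) :=
    (hP.const_mul 2).add hPsub
  have hmajorant :
      ∫ ρ, (2 * lorentzian ε ρ + lorentzian ε (β - α - ρ) + lorentzian ε (β - α + ρ)) =
        4 * π := by
    rw [integral_add hPtwo hPadd, integral_add (hP.const_mul 2) hPsub,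
      integral_const_mul, integral_sub_left_eq_self, integral_add_left_eq_self,
      integral_lorentzian hε]
    ring
  refine (abs_setIntegral_le_half_integral hS ((hPtwo.add hPadd).const_mul _)
    (abs_commutatorIntegrand_add_neg_le h hw hα hβ)).trans_eq ?_
  rw [integral_const_mul, Pi.add_def, hmajorant]
  ring

end CommutatorBound

lemma norm_derivWithin_le_of_norm_iteratedDerivWithin_two_le {E : Type*} [NormedAddCommGroup E]
    [NormedSpace ℝ E] {A : ℝ} {F : ℝ → E} {s : Set ℝ} {x x₀ : ℝ} (hs : Convex ℝ s)
    (hs' : UniqueDiffOn ℝ s) (hF : ContDiffOn ℝ 2 F s)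
    (hbound : ∀ y ∈ s, ‖iteratedDerivWithin 2 F s y‖ ≤ A) (hx₀ : x₀ ∈ s)
    (hF₀ : derivWithin F s x₀ = 0) (hx : x ∈ s) :
    ‖derivWithin F s x‖ ≤ A * ‖x - x₀‖ := by
  have hdiff : DifferentiableOn ℝ (derivWithin F s) s :=
    (hF.derivWithin (m := 1) hs' (by norm_num)).differentiableOn one_ne_zero
  have hbound' : ∀ y ∈ s, ‖derivWithin (derivWithin F s) s y‖ ≤ A := by
    simpa only [iteratedDerivWithin_succ (n := 1), iteratedDerivWithin_one] using hbound
  simpa only [hF₀, sub_zero] using hs.norm_image_sub_le_of_norm_derivWithin_le hdiff hbound' hx₀ hx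

/-- The gap `X` between the two interfaces near `0`: it is bounded below by `ε` for `|x| < √ε`, and
its oscillation there is at most quadratic, because `0` is a critical point. -/
structure IsQuadraticGap (A ε : ℝ) (X : ℝ → ℝ) : Prop where
  scale_pos : 0 < ε
  map_zero : X 0 = 2 * ε
  differentiableAt : ∀ {x}, |x| < √ε → DifferentiableAt ℝ X x
  abs_deriv_le : ∀ {x}, |x| < √ε → |deriv X x| ≤ A * |x|
  le_apply : ∀ {x}, |x| < √ε → ε ≤ X x

lemma GoodFG.isQuadraticGap {δ A ε : ℝ} {f g : ℝ → ℝ} (h : GoodFG δ A ε f g)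
    (hδ : 0 < δ) (hε : ε ∈ Ioc 0 (δ ^ 2 / 100)) : IsQuadraticGap A ε (Xt ε f g) := by
  obtain ⟨hf, hg, hf0, hg0, hf0', hg0', hbound, hlower⟩ := h
  have hεδ : √ε < δ := (sqrt_lt' hδ).2 (by nlinarith [hε.2])
  have hmem {x : ℝ} (hx : |x| < √ε) : x ∈ Ioo (-δ) δ := abs_lt.1 (hx.trans hεδ)
  have hnhds {x : ℝ} (hx : |x| < √ε) : Ioo (-δ) δ ∈ nhds x := isOpen_Ioo.mem_nhds (hmem hx)
  have h0 : (0 : ℝ) ∈ Ioo (-δ) δ := ⟨neg_lt_zero.2 hδ, hδ⟩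
  have hX : Xt ε f g = fun x ↦ 2 * ε + (f + g) x := by
    ext x; simp only [Xt, Pi.add_apply, add_assoc]
  have hfg : ContDiffOn ℝ 2 (f + g) (Ioo (-δ) δ) := (hf.add hg).of_le (by norm_num)
  have hfg' : derivWithin (f + g) (Ioo (-δ) δ) 0 = 0 := by
    rw [derivWithin_add (hf.differentiableOn (by norm_num) 0 h0)
      (hg.differentiableOn (by norm_num) 0 h0), hf0', hg0', add_zero]
  have hfg'' : ∀ x ∈ Ioo (-δ) δ, ‖iteratedDerivWithin 2 (f + g) (Ioo (-δ) δ) x‖ ≤ A := fun x hx ↦ by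
    rw [iteratedDerivWithin_add hx (uniqueDiffOn_Ioo _ _) ((hf x hx).of_le (by norm_num))
      ((hg x hx).of_le (by norm_num))]
    exact (norm_add_le _ _).trans (hbound x hx 2 (by norm_num))
  refine ⟨hε.1, by simp only [Xt, hf0, hg0, add_zero], fun hx ↦ ?_, fun {x} hx ↦ ?_,
    fun {x} hx ↦ ?_⟩
  · rw [hX]
    exact ((hfg.differentiableOn two_ne_zero).differentiableAt (hnhds hx)).const_add _
  · rw [hX, deriv_const_add, ← derivWithin_of_mem_nhds (hnhds hx)]
    simpa only [Real.norm_eq_abs, sub_zero] using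
      norm_derivWithin_le_of_norm_iteratedDerivWithin_two_le (convex_Ioo _ _)
        (uniqueDiffOn_Ioo _ _) hfg hfg'' h0 hfg' (hmem hx)
  · have hx' : x ∈ Ioo (-(4 * √ε)) (4 * √ε) := abs_lt.1 (by linarith [abs_nonneg x])
    simp only [Xt]
    linarith [hlower x hx' x hx']

namespace IsQuadraticGap

variable {A ε : ℝ} {X : ℝ → ℝ} {x y : ℝ}

lemma sqrt_scale_pos (h : IsQuadraticGap A ε X) : 0 < √ε := sqrt_pos.2 h.scale_pos

lemma curvature_nonneg (h : IsQuadraticGap A ε X) : 0 ≤ A := by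
  have hε := h.sqrt_scale_pos
  have hhalf : |√ε / 2| = √ε / 2 := abs_of_pos (half_pos hε)
  have hA := (abs_nonneg _).trans (h.abs_deriv_le (hhalf.trans_lt (half_lt_self hε)))
  rw [hhalf] at hA
  exact nonneg_of_mul_nonneg_left hA (half_pos hε)

lemma abs_sub_le (h : IsQuadraticGap A ε X) (hx : |x| < √ε) (hy : |y| < √ε) :
    |X x - X y| ≤ A * (|x| + |y|) * |x - y| := by
  have hA := h.curvature_nonneg
  set m := max |x| |y|
  have hball {z : ℝ} : z ∈ Metric.closedBall 0 m ↔ |z| ≤ m := mem_closedBall_zero_iff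
  have hsub {z : ℝ} (hz : z ∈ Metric.closedBall 0 m) : |z| < √ε :=
    (hball.1 hz).trans_lt (max_lt hx hy)
  have hderiv : ∀ z ∈ Metric.closedBall (0 : ℝ) m, ‖deriv X z‖ ≤ A * m := fun z hz ↦
    (h.abs_deriv_le (hsub hz)).trans (mul_le_mul_of_nonneg_left (hball.1 hz) hA)
  calc |X x - X y| ≤ A * m * |x - y| :=
        (convex_closedBall 0 m).norm_image_sub_le_of_norm_deriv_le
          (fun z hz ↦ h.differentiableAt (hsub hz)) hderiv (hball.2 (le_max_right _ _))
          (hball.2 (le_max_left _ _))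
    _ ≤ A * (|x| + |y|) * |x - y| := by
        gcongr
        exact max_le_add_of_nonneg (abs_nonneg _) (abs_nonneg _)

lemma apply_le (h : IsQuadraticGap A ε X) (hx : |x| < √ε) : X x ≤ (2 + A) * ε := by
  have hA := h.curvature_nonneg
  have hosc : |X x - X 0| ≤ A * ε := by
    calc |X x - X 0| ≤ A * (|x| * |x|) := by
          simpa only [abs_zero, add_zero, sub_zero, mul_assoc] using
            h.abs_sub_le hx (abs_zero.trans_lt h.sqrt_scale_pos)
      _ ≤ A * (√ε * √ε) := by gcongr
      _ = A * ε := by rw [mul_self_sqrt h.scale_pos.le]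
  rw [h.map_zero] at hosc
  linarith [le_abs_self (X x - 2 * ε)]

lemma isSlowlyVarying (h : IsQuadraticGap A ε X) {L : NNReal} {w : ℝ → ℝ}
    (hw : IsCutoffOfRadius (√ε / 2 ^ 6) L w) :
    IsSlowlyVarying ε (2 + A) (A + 2 ^ 13 * L) (4 * (√ε / 2 ^ 6)) X w := by
  have hA := h.curvature_nonneg
  have hε := h.sqrt_scale_pos
  have hlt {x : ℝ} (hx : |x| ≤ 4 * (√ε / 2 ^ 6)) : |x| < √ε := hx.trans_lt (by linarith)
  refine ⟨h.scale_pos, by positivity, fun hx ↦ h.le_apply (hlt hx), fun hx ↦ h.apply_le (hlt hx),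
    fun {x y} hx hy ↦ ?_, fun {x y} _ _ ↦ ?_, hw.abs_le_one⟩
  · refine (h.abs_sub_le (hlt hx) (hlt hy)).trans ?_
    gcongr
    exact le_add_of_nonneg_right (by positivity)
  · calc ε * |w x - w y|
        ≤ ε * (2 * L / (√ε / 2 ^ 6) ^ 2 * (|x| + |y|) * |x - y|) :=
          mul_le_mul_of_nonneg_left (hw.abs_sub_le_add_mul x y) h.scale_pos.le
      _ = 2 ^ 13 * L * (|x| + |y|) * |x - y| := by
          rw [div_pow, sq_sqrt h.scale_pos.le]
          have := h.scale_pos.ne'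
          field_simp
      _ ≤ (A + 2 ^ 13 * L) * (|x| + |y|) * |x - y| := by
          gcongr
          exact le_add_of_nonneg_left hA

end IsQuadraticGap

/-- Because of the `1/ρ` singularity the integrand need not be integrable over `S = univ`, where the
Bochner integral is then `0`; the symmetric truncations `S = {ρ | r < |ρ|}` bound the principal
value. -/
theorem commutator_kernel_bound_general {A ε : ℝ} {L : NNReal} {ψ X : ℝ → ℝ}
    (hψ : IsCutoffOfRadius 1 L ψ) (hX : IsQuadraticGap A ε X) {S : Set ℝ}
    (hS : Neg.neg ⁻¹' S = S) (α β : ℝ) :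
    |∫ ρ in S, commutatorIntegrand X (scut ψ (√ε / 2 ^ 6)) α β ρ| ≤
      8 * π * (13 + 12 * L) * (2 + A) ^ 3 * (A + 2 ^ 13 * L) * scut ψ √ε β * scut ψ √ε α *
        (ε * (|α| + |β| + ε) / ((β - α) ^ 2 + ε ^ 2)) := by
  have hε := hX.sqrt_scale_pos
  have hw := hψ.scut (r := √ε / 2 ^ 6) (by positivity)
  have hψε := hψ.scut hε
  by_cases hfar : √ε / 2 ^ 6 < |β| ∨ 3 * (√ε / 2 ^ 6) < |α|
  · have := hX.curvature_nonneg
    have := hX.scale_pos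
    have := hψε.nonneg α
    have := hψε.nonneg β
    simp only [commutatorIntegrand_eq_zero hw hfar, integral_zero, abs_zero]
    positivity
  · obtain ⟨hβ, hα⟩ : |β| ≤ √ε / 2 ^ 6 ∧ |α| ≤ 3 * (√ε / 2 ^ 6) := by
      simpa only [not_or, not_lt] using hfar
    rw [hψε.eq_one (x := β) (by linarith), hψε.eq_one (x := α) (by linarith), mul_one, mul_one]
    convert abs_setIntegral_commutatorIntegrand_le (hX.isSlowlyVarying hw) hw hα hβ hS using 2
    rw [lorentzian, mul_div_assoc', mul_comm ε]

/-- **Pointwise bound on the commutator kernel (estimate (3.152.5)).**  For all `α, β ∈ ℝ`,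
`|K(α,β)| ≲ ψ_{√ε}(β) ψ_{√ε}(α) ε(|α|+|β|+ε)/((β−α)²+ε²)`, with the constant depending only on
`A`, `δ` (and `ψ`). -/
theorem commutator_kernel_bound (δ A : ℝ) (hδ : δ ∈ Ioc (0:ℝ) (1/100)) (hA : 1 ≤ A)
    (ψ : ℝ → ℝ) (hψ : IsCutoff ψ) :
    ∃ C : ℝ, 0 < C ∧
      ∀ ε : ℝ, ε ∈ Ioc (0:ℝ) (δ ^ 2 / 100) →
      ∀ f g : ℝ → ℝ, GoodFG δ A ε f g →
      ∀ α β : ℝ,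
        |Kcom ψ ε f g α β| ≤
          C * scut ψ (Real.sqrt ε) β * scut ψ (Real.sqrt ε) α *
            (ε * (|α| + |β| + ε) / ((β - α) ^ 2 + ε ^ 2)) := by
  obtain ⟨L, hL⟩ := hψ.exists_isCutoffOfRadius_one
  refine ⟨8 * π * (13 + 12 * L) * (2 + A) ^ 3 * (A + 2 ^ 13 * L), by positivity,
    fun ε hε f g hfg α β ↦ ?_⟩
  rw [Kcom_eq_integral_commutatorIntegrand, ← setIntegral_univ]
  exact commutator_kernel_bound_general hL (hfg.isQuadraticGap hδ.1 hε) preimage_univ α β
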